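/- Let L_1 and L_2 be two distinct lines in P^2 meeting at a point p_0, let r, s ≥ 1, let p_1,…,p_r be distinct points of L_1 \ {p_0} and p_{r+1},…,p_{r+s} be distinct points of L_2 \ {p_0}, and let Z = 2p_0 + p_1 + ⋯ + p_{r+s} be the fat points scheme with a double point at p_0 and simple points at p_1,…,p_{r+s}. Then the Waldschmidt constant of I(Z) equals 2. -/

import Mathlib

noncomputable section

open MvPolynomial

/-- `alpha J` is the least degree of a nonzero homogeneous form in the ideal `J`. -/
def alpha {kk : Type*} [Field kk] {σ : Type*} (J : Ideal (MvPolynomial σ kk)) : ℕ :=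
  sInf {d : ℕ | ∃ f ∈ J, f ≠ 0 ∧ MvPolynomial.IsHomogeneous f d}

/-- The homogeneous (prime) ideal of the point of `ℙ²` represented by the nonzero vector
`p`, generated by the linear forms vanishing at `p`. -/
def pointIdeal {kk : Type*} [Field kk] (p : Fin 3 → kk) : Ideal (MvPolynomial (Fin 3) kk) :=
  Ideal.span {f | f.IsHomogeneous 1 ∧ MvPolynomial.eval p f = 0}

/-- Two nonzero vectors represent the same point of `ℙ²`. -/
def projEq {kk : Type*} [Field kk] (p q : Fin 3 → kk) : Prop :=
  ∃ c : kk, c ≠ 0 ∧ q = c • p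

theorem waux_mem {kk : Type*} [Field kk] (p : Fin 3 → kk) (f : MvPolynomial (Fin 3) kk)
    (h1 : f.IsHomogeneous 1) (h2 : MvPolynomial.eval p f = 0) : f ∈ pointIdeal p :=
  Ideal.subset_span ⟨h1, h2⟩

theorem waux_le {kk : Type*} [Field kk] (p : Fin 3 → kk) :
    pointIdeal p ≤ MvPolynomial.idealOfVars (Fin 3) kk := by
  rw [pointIdeal, Ideal.span_le]
  rintro f ⟨hf, -⟩
  have h : f ∈ MvPolynomial.idealOfVars (Fin 3) kk ^ 1 := by
    rw [MvPolynomial.mem_pow_idealOfVars_iff']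
    intro x hx
    exact hf.coeff_eq_zero (by omega)
  simpa using h

theorem waux_deg {kk : Type*} [Field kk] (p : Fin 3 → kk) (n d : ℕ)
    (f : MvPolynomial (Fin 3) kk) (hf : f ∈ pointIdeal p ^ n) (h0 : f ≠ 0)
    (hd : f.IsHomogeneous d) : n ≤ d := by
  by_contra hlt
  have h := Ideal.pow_right_mono (waux_le p) n hf
  rw [MvPolynomial.mem_pow_idealOfVars_iff'] at h
  apply h0
  ext x
  rw [MvPolynomial.coeff_zero]
  by_cases hx : x.degree = d
  · exact h x (by omega)
  · exact hd.coeff_eq_zero hx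

/-- Let `L₁ = {ℓ₁ = 0}` and `L₂ = {ℓ₂ = 0}` be two distinct lines of `ℙ²`
meeting at the point `p₀`, let `r, s ≥ 1`, let `p 1, …, p r` be distinct points of
`L₁ \ {p₀}` and `p' 1, …, p' s` distinct points of `L₂ \ {p₀}`, and let
`Z = 2p₀ + p_1 + ⋯ + p_r + p'_1 + ⋯ + p'_s`.  Then the Waldschmidt constant of `I(Z)`
equals `2`. -/
theorem waldschmidt_double_intersection_point
    {kk : Type*} [Field kk] [IsAlgClosed kk]
    (ℓ₁ ℓ₂ : MvPolynomial (Fin 3) kk)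
    (hl1 : ℓ₁ ≠ 0) (hl2 : ℓ₂ ≠ 0)
    (hd1 : ℓ₁.IsHomogeneous 1) (hd2 : ℓ₂.IsHomogeneous 1)
    (hne : ¬ ∃ c : kk, c ≠ 0 ∧ ℓ₂ = c • ℓ₁)
    (p₀ : Fin 3 → kk) (hp00 : p₀ ≠ 0)
    (hp01 : MvPolynomial.eval p₀ ℓ₁ = 0) (hp02 : MvPolynomial.eval p₀ ℓ₂ = 0)
    (r s : ℕ) (hr : 1 ≤ r) (hs : 1 ≤ s)
    (p : Fin r → (Fin 3 → kk)) (hp0 : ∀ i, p i ≠ 0)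
    (hpL : ∀ i, MvPolynomial.eval (p i) ℓ₁ = 0)
    (hpq : ∀ i, ¬ projEq (p i) p₀)
    (hpdist : ∀ i j, i ≠ j → ¬ projEq (p i) (p j))
    (p' : Fin s → (Fin 3 → kk)) (hp'0 : ∀ i, p' i ≠ 0)
    (hp'L : ∀ i, MvPolynomial.eval (p' i) ℓ₂ = 0)
    (hp'q : ∀ i, ¬ projEq (p' i) p₀)
    (hp'dist : ∀ i j, i ≠ j → ¬ projEq (p' i) (p' j)) :
    (⨅ k : ℕ+, (alpha (pointIdeal p₀ ^ (2 * (k : ℕ)) ⊓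
        (⨅ i : Fin r, pointIdeal (p i) ^ (k : ℕ)) ⊓
        ⨅ i : Fin s, pointIdeal (p' i) ^ (k : ℕ)) : ℝ) / ((k : ℕ) : ℝ)) = 2 := by
  have key : ∀ k : ℕ, (ℓ₁ ^ k * ℓ₂ ^ k) ∈ (pointIdeal p₀ ^ (2 * k) ⊓
        (⨅ i : Fin r, pointIdeal (p i) ^ k) ⊓
        ⨅ i : Fin s, pointIdeal (p' i) ^ k) := by
    intro k
    refine ⟨⟨?_, ?_⟩, ?_⟩
    · rw [two_mul, pow_add]
      exact Ideal.mul_mem_mul (Ideal.pow_mem_pow (waux_mem _ _ hd1 (hp01)) k)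
        (Ideal.pow_mem_pow (waux_mem _ _ hd2 (hp02)) k)
    · simp only [SetLike.mem_coe, Ideal.mem_iInf]
      intro i
      exact Ideal.mul_mem_right _ _ (Ideal.pow_mem_pow (waux_mem _ _ hd1 (hpL i)) k)
    · simp only [SetLike.mem_coe, Ideal.mem_iInf]
      intro i
      exact Ideal.mul_mem_left _ _ (Ideal.pow_mem_pow (waux_mem _ _ hd2 (hp'L i)) k)
  have key0 : ∀ k : ℕ, ℓ₁ ^ k * ℓ₂ ^ k ≠ 0 := fun k =>
    mul_ne_zero (pow_ne_zero _ hl1) (pow_ne_zero _ hl2)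
  have keyd : ∀ k : ℕ, (ℓ₁ ^ k * ℓ₂ ^ k).IsHomogeneous (2 * k) := by
    intro k
    have h := (hd1.pow k).mul (hd2.pow k)
    have e : 1 * k + 1 * k = 2 * k := by ring
    rwa [e] at h
  have hα : ∀ k : ℕ, alpha (pointIdeal p₀ ^ (2 * k) ⊓
        (⨅ i : Fin r, pointIdeal (p i) ^ k) ⊓
        ⨅ i : Fin s, pointIdeal (p' i) ^ k) = 2 * k := by
    intro k
    apply le_antisymm
    · exact Nat.sInf_le ⟨_, key k, key0 k, keyd k⟩
    · refine le_csInf ⟨_, _, key k, key0 k, keyd k⟩ ?_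
      rintro d ⟨f, hf, hf0, hfd⟩
      exact waux_deg p₀ _ d f hf.1.1 hf0 hfd
  have hc : ∀ k : ℕ+, ((2 * (k : ℕ) : ℕ) : ℝ) / ((k : ℕ) : ℝ) = 2 := by
    intro k
    have : ((k : ℕ) : ℝ) ≠ 0 := by exact_mod_cast k.ne_zero
    push_cast
    field_simp
  simp only [hα, hc, ciInf_const]
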